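/- Let θ ∈ [0,1), α > 0, t₀ > 0, γ₁ > 2 and γ₂ ≥ γ₁, and set r = (1 + θ)/2. Let x : [t₀, ∞) → ℝⁿ be a solution of the perturbed inertial ODE with damping α/t^θ. Assume that ∫_{t₀}^∞ t^{rγ₂/(γ₂ − 2)} ‖g(t)‖ dt < ∞ and that F satisfies hypotheses H1(γ₁) and H2(γ₂) and admits a unique minimizer. Then there exist C > 0 and t₁ ≥ t₀ such that for all t ≥ t₁, F(x(t)) − F* ≤ C · t^{−2rγ₂/(γ₂ − 2)}. -/

import Mathlib

open MeasureTheory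
open scoped RealInnerProductSpace

/-!
Let `z` be the minimizer, `γ = γ₂` and `b = rγ / (γ - 2)`. Convexity along rays propagates the local
growth `K ‖x - z‖ ^ γ ≤ F x - F z` to every sublevel set, and the trajectory stays in one because
its mechanical energy is bounded. Put
`W = t ^ (2b) (F x - F z + ‖x'‖² / 2 + (2 (b + 1) / t) ⟪x - z, x'⟫) + 1`.
The only harmful term in `t W'` is a multiple of `t ^ (2b) ‖x - z‖² / t ^ (1 + θ)`. Since
`2b - (1 + θ) = 4b / γ`, growth bounds it by a multiple of `(t ^ (2b) (F x - F z)) ^ (2 / γ)`, and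
as `2 / γ < 1` the dissipation `-2 t ^ (2b) (F x - F z)` wins as soon as `W` is large. The forcing
contributes at most a multiple of `t ^ b ‖g‖ W` to `W'`, and `t ^ b ‖g‖` is integrable, so `W` is
bounded by Gronwall's inequality.
-/

section Gronwall

open Set

lemma exists_bounded_antideriv_of_integrableOn_Ici {h : ℝ → ℝ} {T : ℝ}
    (hcont : ContinuousOn h (Ici T)) (hint : IntegrableOn h (Ici T)) :
    ∃ (H : ℝ → ℝ) (M : ℝ), ∀ t ≥ T, HasDerivAt H (h t) t ∧ |H t| ≤ M := by
  set k : ℝ → ℝ := fun s => h (max T s)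
  have hk : Continuous k :=
    hcont.comp_continuous (by fun_prop) fun s => le_max_left T s
  have hk_eq : EqOn k h (Ici T) := fun s hs => by simp only [k, max_eq_right (mem_Ici.1 hs)]
  have hk_int : IntegrableOn k (Ici T) := hint.congr_fun hk_eq.symm measurableSet_Ici
  refine ⟨fun t => ∫ s in T..t, k s, ∫ s in Ici T, |k s|, fun t ht => ⟨?_, ?_⟩⟩
  · exact hk_eq ht ▸ (hk.integral_hasStrictDerivAt T t).hasDerivAt
  · calc |∫ s in T..t, k s| ≤ ∫ s in T..t, |k s| :=
          intervalIntegral.abs_integral_le_integral_abs ht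
      _ = ∫ s in Ioc T t, |k s| := intervalIntegral.integral_of_le ht
      _ ≤ ∫ s in Ici T, |k s| := setIntegral_mono_set hk_int.abs
          (ae_of_all _ fun s => abs_nonneg (k s))
          (Ioc_subset_Ioi_self.trans Ioi_subset_Ici_self).eventuallyLE

/-- The summand `exp (-t)` makes the comparison with the barrier strict and stays integrable. -/
lemma exists_forall_le_of_deriv_le_mul {P h : ℝ → ℝ} {T q : ℝ}
    (hP : ∀ t ≥ T, DifferentiableAt ℝ P t)
    (hcont : ContinuousOn h (Ici T)) (hint : IntegrableOn h (Ici T))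
    (hderiv : ∀ t ≥ T, q ≤ P t → deriv P t ≤ h t * P t) :
    ∃ C, ∀ t ≥ T, P t ≤ C := by
  obtain ⟨H, M, hH⟩ := exists_bounded_antideriv_of_integrableOn_Ici
    (h := fun t => h t + Real.exp (-t)) (hcont.add (by fun_prop))
    (hint.add ((integrableOn_Ici_iff_integrableOn_Ioi (by finiteness)).2
      (integrableOn_exp_neg_Ioi T)))
  set K := max 1 (max q (P T))
  have hK : 0 < K := one_pos.trans_le (le_max_left _ _)
  set barrier : ℝ → ℝ := fun t => K * Real.exp (M + H t)
  have hbarrier : ∀ t ≥ T,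
      HasDerivAt barrier ((h t + Real.exp (-t)) * barrier t) t := fun t ht =>
    ((((hH t ht).1.const_add M).exp).const_mul K).congr_deriv (by simp only [barrier]; ring)
  have hK_le : ∀ t ≥ T, K ≤ barrier t := fun t ht =>
    le_mul_of_one_le_right hK.le
      (Real.one_le_exp (by linarith [neg_le_of_abs_le (hH t ht).2]))
  have hP_le : ∀ t ≥ T, P t ≤ barrier t := fun t ht =>
    image_le_of_deriv_right_lt_deriv_boundary' (a := T) (b := t)
      (fun s hs => (hP s hs.1).continuousAt.continuousWithinAt)
      (fun s hs => (hP s hs.1).hasDerivAt.hasDerivWithinAt)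
      ((le_max_right _ _).trans ((le_max_right _ _).trans (hK_le T le_rfl)))
      (fun s hs => (hbarrier s hs.1).continuousAt.continuousWithinAt)
      (fun s hs => (hbarrier s hs.1).hasDerivWithinAt)
      (fun s hs hcontact => by
        have hq : q ≤ P s :=
          hcontact ▸ (le_max_left _ _).trans ((le_max_right _ _).trans (hK_le s hs.1))
        have hpos : 0 < barrier s := hK.trans_le (hK_le s hs.1)
        have := hderiv s hs.1 hq
        rw [hcontact] at this
        nlinarith [mul_pos (Real.exp_pos (-s)) hpos])
      (right_mem_Icc.2 ht)
  refine ⟨K * Real.exp (M + M), fun t ht => (hP_le t ht).trans ?_⟩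
  have := le_of_abs_le (hH t ht).2
  simp only [barrier]
  gcongr

end Gronwall

lemma exists_mul_rpow_le_mul_rpow_add {p q : ℝ} (hp : 0 ≤ p) (hpq : p < q) {L K : ℝ}
    (hL : 0 ≤ L) (hK : 0 < K) : ∃ B, ∀ u, 0 ≤ u → L * u ^ p ≤ K * u ^ q + B := by
  set u₀ := (L / K) ^ (q - p)⁻¹
  have hu₀ : 0 ≤ u₀ := by positivity
  have hu₀_rpow : u₀ ^ (q - p) = L / K := Real.rpow_inv_rpow (by positivity) (sub_pos.2 hpq).ne'
  refine ⟨L * u₀ ^ p, fun u hu => ?_⟩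
  rcases le_or_gt u u₀ with hle | hlt
  · have : L * u ^ p ≤ L * u₀ ^ p := by gcongr
    have : 0 ≤ K * u ^ q := by positivity
    linarith
  · have hlarge : L ≤ K * u ^ (q - p) := by
      rw [← div_le_iff₀' hK, ← hu₀_rpow]
      exact Real.rpow_le_rpow hu₀ hlt.le (sub_pos.2 hpq).le
    have : L * u ^ p ≤ K * u ^ q := by
      calc L * u ^ p ≤ K * u ^ (q - p) * u ^ p := by gcongr
        _ = K * u ^ q := by
          rw [mul_assoc, ← Real.rpow_add (hu₀.trans_lt hlt), sub_add_cancel]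
    have : 0 ≤ L * u₀ ^ p := by positivity
    linarith

section Convex

open Topology

variable {E : Type*} [NormedAddCommGroup E]

section Growth

variable [NormedSpace ℝ E] {F : E → ℝ} {z : E}

lemma apply_add_smul_sub_le_of_convexOn (hF : ConvexOn ℝ Set.univ F) (y : E) {s : ℝ}
    (hs₀ : 0 ≤ s) (hs₁ : s ≤ 1) : F (z + s • (y - z)) - F z ≤ s * (F y - F z) := by
  have h := hF.2 (Set.mem_univ z) (Set.mem_univ y) (sub_nonneg.2 hs₁) hs₀ (by ring)
  rw [show (1 - s) • z + s • y = z + s • (y - z) by module] at h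
  simp only [smul_eq_mul] at h
  linarith

lemma mul_norm_sub_le_of_convexOn_of_sphere (hF : ConvexOn ℝ Set.univ F) {δ κ : ℝ} (hδ : 0 < δ)
    (hsphere : ∀ y, ‖y - z‖ = δ → κ ≤ F y - F z) {y : E} (hy : δ ≤ ‖y - z‖) :
    κ * ‖y - z‖ ≤ δ * (F y - F z) := by
  have hpos : 0 < ‖y - z‖ := hδ.trans_le hy
  set s := δ / ‖y - z‖
  have hs₀ : 0 ≤ s := by positivity
  have hnorm : ‖z + s • (y - z) - z‖ = δ := by
    rw [add_sub_cancel_left, norm_smul, Real.norm_of_nonneg hs₀, div_mul_cancel₀ _ hpos.ne']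
  have hray : κ ≤ δ / ‖y - z‖ * (F y - F z) := (hsphere _ hnorm).trans
    (apply_add_smul_sub_le_of_convexOn hF y hs₀ ((div_le_one hpos).2 hy))
  rwa [div_mul_eq_mul_div, le_div_iff₀ hpos] at hray

lemma exists_mul_rpow_norm_sub_le_of_convexOn_of_sublevel (hF : ConvexOn ℝ Set.univ F)
    {K γ : ℝ} (hK : 0 < K) (hgrowth : ∀ᶠ y in 𝓝 z, K * ‖y - z‖ ^ γ ≤ F y - F z) (R : ℝ) :
    ∃ K' > 0, ∀ y, F y - F z ≤ R → K' * ‖y - z‖ ^ γ ≤ F y - F z := by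
  obtain ⟨ε, hε, hball⟩ := Metric.eventually_nhds_iff.1 hgrowth
  simp only [dist_eq_norm] at hball
  set δ := ε / 2
  have hδ : 0 < δ := half_pos hε
  have hδε : δ < ε := half_lt_self hε
  set κ := K * δ ^ γ
  have hκ : 0 < κ := by positivity
  set D := max δ (δ * R / κ)
  have hD : 0 < D := hδ.trans_le (le_max_left _ _)
  have hbounded : ∀ y, F y - F z ≤ R → ‖y - z‖ ≤ D := fun y hy => by
    rcases le_total ‖y - z‖ δ with hnear | hfar
    · exact hnear.trans (le_max_left _ _)
    · refine le_max_of_le_right ((le_div_iff₀' hκ).2 ?_)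
      calc κ * ‖y - z‖ ≤ δ * (F y - F z) :=
            mul_norm_sub_le_of_convexOn_of_sphere hF hδ
              (fun u hu => by simpa only [hu] using hball (hu.trans_lt hδε)) hfar
        _ ≤ δ * R := by gcongr
  set s := δ / D
  have hs : 0 < s := by positivity
  refine ⟨K * s ^ γ / s, by positivity, fun y hy => ?_⟩
  have hnorm : ‖z + s • (y - z) - z‖ = s * ‖y - z‖ := by
    rw [add_sub_cancel_left, norm_smul, Real.norm_of_nonneg hs.le]
  have hnear : s * ‖y - z‖ ≤ δ := by
    calc s * ‖y - z‖ ≤ s * D := by gcongr; exact hbounded y hy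
      _ = δ := div_mul_cancel₀ _ hD.ne'
  have hray : K * (s * ‖y - z‖) ^ γ ≤ s * (F y - F z) := by
    rw [← hnorm]
    exact (hball (hnorm ▸ hnear.trans_lt hδε)).trans
      (apply_add_smul_sub_le_of_convexOn hF y hs.le ((div_le_one hD).2 (le_max_left _ _)))
  rw [Real.mul_rpow hs.le (norm_nonneg _)] at hray
  rw [div_mul_eq_mul_div, div_le_iff₀' hs]
  linarith

lemma apply_le_of_convexOn_of_rpow_growth (hF : ConvexOn ℝ Set.univ F) {K γ : ℝ} (hK : 0 ≤ K)
    (hgrowth : ∀ᶠ y in 𝓝 z, K * ‖y - z‖ ^ γ ≤ F y - F z) (y : E) : F z ≤ F y :=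
  IsMinOn.of_isLocalMin_of_convex_univ
    (hgrowth.mono fun u hu => sub_nonneg.1 ((by positivity : 0 ≤ K * ‖u - z‖ ^ γ).trans hu)) hF y

end Growth

section Gradient

variable [InnerProductSpace ℝ E] [CompleteSpace E] {F : E → ℝ}

lemma hasDerivAt_comp_inner_gradient {x : ℝ → E} {v : E} {t : ℝ}
    (hF : DifferentiableAt ℝ F (x t)) (hx : HasDerivAt x v t) :
    HasDerivAt (fun s => F (x s)) ⟪gradient F (x t), v⟫ t :=
  hF.hasGradientAt.hasFDerivAt.comp_hasDerivAt t hx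

lemma sub_le_inner_gradient_of_convexOn (hF : ConvexOn ℝ Set.univ F) {y : E}
    (hdiff : DifferentiableAt ℝ F y) (z : E) : F y - F z ≤ ⟪gradient F y, y - z⟫ := by
  have hline : HasDerivAt (AffineMap.lineMap y z : ℝ → E) (z - y) 0 := AffineMap.hasDerivAt_lineMap
  have hderiv : HasDerivAt (F ∘ AffineMap.lineMap y z) ⟪gradient F y, z - y⟫ (0 : ℝ) := by
    simpa only [Function.comp_def, AffineMap.lineMap_apply_zero] using
      hasDerivAt_comp_inner_gradient (by simpa using hdiff) hline
  have hslope := (hF.comp_affineMap (AffineMap.lineMap y z)).le_slope_of_hasDerivAt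
    (Set.mem_univ 0) (Set.mem_univ 1) one_pos hderiv
  simp only [slope_def_field, Function.comp_apply, AffineMap.lineMap_apply_zero,
    AffineMap.lineMap_apply_one, sub_zero, div_one] at hslope
  rw [← neg_sub z y, inner_neg_right]
  linarith

end Gradient
end Convex

section Dynamics

open Set Filter

variable {E : Type*} [NormedAddCommGroup E] [InnerProductSpace ℝ E]

/-- The energy `F(x) - F(z) + ‖x'‖² / 2` of a trajectory with position `x` and velocity `v`,
relative to the reference point `z`. -/
noncomputable def mechanicalEnergy (F : E → ℝ) (z : E) (x v : ℝ → E) (t : ℝ) : ℝ :=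
  F (x t) - F z + ‖v t‖ ^ 2 / 2

/-- The Lyapunov function obtained from the mechanical energy by adding the cross term
`(c / t) ⟪x - z, x'⟫`. -/
noncomputable def crossEnergy (F : E → ℝ) (z : E) (c : ℝ) (x v : ℝ → E) (t : ℝ) : ℝ :=
  mechanicalEnergy F z x v t + c * (t⁻¹ * ⟪x t - z, v t⟫)

/-- The Lyapunov function `crossEnergy`, rescaled by the expected rate `t ^ (2 b)`. With the
coupling `2 (b + 1)`, differentiating the weight still leaves a multiple `-2 / t` of the potential
energy; the summand `1` absorbs the linear terms `‖x'‖` and `‖x - z‖` produced by the forcing. -/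
noncomputable def scaledEnergy (F : E → ℝ) (z : E) (b : ℝ) (x v : ℝ → E) (t : ℝ) : ℝ :=
  t ^ (2 * b) * crossEnergy F z (2 * (b + 1)) x v t + 1

lemma hasDerivAt_rpow_mul {f : ℝ → ℝ} {f' t : ℝ} (p : ℝ) (ht : 0 < t) (hf : HasDerivAt f f' t) :
    HasDerivAt (fun s => s ^ p * f s) (t ^ p * (f' + p * t⁻¹ * f t)) t := by
  refine ((Real.hasDerivAt_rpow_const (Or.inl ht.ne')).mul hf).congr_deriv ?_
  rw [Real.rpow_sub_one ht.ne']
  ring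

lemma rpow_two_mul_eq_sq {t : ℝ} (ht : 0 ≤ t) (b : ℝ) : t ^ (2 * b) = (t ^ b) ^ 2 := by
  rw [mul_comm, Real.rpow_mul ht, Real.rpow_two]

lemma mul_le_sq_half_add_of_abs_le {β i b V Z p : ℝ} (hi : 0 ≤ i) (hb : 0 ≤ b)
    (hβ : (2 * b + 1) * i ≤ β) (hp : |p| ≤ Z * V) (c : ℝ) (hc : 0 ≤ c) :
    c * i * ((2 * b - 1) * i - β) * p ≤ β * V ^ 2 / 2 + 2 * c ^ 2 * (β * i ^ 2 * Z ^ 2) := by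
  have hβ₀ : 0 ≤ β := le_trans (by positivity) hβ
  have hcoef : |(2 * b - 1) * i - β| ≤ 2 * β := abs_le.2 ⟨by nlinarith, by nlinarith⟩
  calc c * i * ((2 * b - 1) * i - β) * p ≤ c * i * (|(2 * b - 1) * i - β| * |p|) := by
        rw [mul_assoc, ← abs_mul]
        exact mul_le_mul_of_nonneg_left (le_abs_self _) (by positivity)
    _ ≤ c * i * (2 * β * (Z * V)) := by gcongr
    _ ≤ β * V ^ 2 / 2 + 2 * c ^ 2 * (β * i ^ 2 * Z ^ 2) := by
        nlinarith [mul_nonneg hβ₀ (sq_nonneg (V - 2 * c * i * Z))]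

lemma add_le_four_mul_energy {y N Q P : ℝ} (hy : 0 ≤ y) (hP : |P| ≤ N * Q)
    (hQ : Q ^ 2 ≤ (1 + y) / 4) : N + Q ≤ 4 * (y + N ^ 2 / 2 + P + 1) := by
  nlinarith [neg_le_of_abs_le hP, sq_nonneg (N / 2 - Q), sq_nonneg (N - 1), sq_nonneg (Q - 1)]

lemma le_four_mul_energy {y N Q P : ℝ} (hP : |P| ≤ N * Q) (hQ : Q ^ 2 ≤ (1 + y) / 4) :
    y ≤ 4 * (y + N ^ 2 / 2 + P + 1) := by
  nlinarith [neg_le_of_abs_le hP, sq_nonneg (N / 2 - Q), sq_nonneg Q, sq_nonneg N]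

lemma energy_le_five_fourths_mul {y N Q P : ℝ} (hP : |P| ≤ N * Q) (hQ : Q ^ 2 ≤ (1 + y) / 4) :
    y + N ^ 2 / 2 + P + 1 ≤ 5 / 4 * (y + N ^ 2 + 1) := by
  nlinarith [le_of_abs_le hP, sq_nonneg (N / 2 - Q), sq_nonneg N]

lemma crossTerm_sq_le {β i c u y B : ℝ} (hi : 0 < i) (hy : 0 ≤ y) (hB : 1 ≤ B)
    (hβ : 2 * B * i ≤ β) (hdist : 2 * c ^ 2 * (β * i * u ^ 2) ≤ y + B) :
    (c * i * u) ^ 2 ≤ (1 + y) / 4 := by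
  have hBi : 2 * B * (2 * (c * i * u) ^ 2) ≤ y + B := by
    refine le_of_mul_le_mul_left ?_ hi
    calc i * (2 * B * (2 * (c * i * u) ^ 2)) = 2 * B * i * (2 * (c * i * u) ^ 2) := by ring
      _ ≤ β * (2 * (c * i * u) ^ 2) := by gcongr
      _ = i * (2 * c ^ 2 * (β * i * u ^ 2)) := by ring
      _ ≤ i * (y + B) := by gcongr
  nlinarith

section ScaledEnergy

variable {F : E → ℝ} {z : E} {b t : ℝ} {x v : ℝ → E}

lemma scaledEnergy_eq (ht : 0 < t) : scaledEnergy F z b x v t =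
    t ^ (2 * b) * (F (x t) - F z) + (t ^ b * ‖v t‖) ^ 2 / 2 +
      t ^ (2 * b) * (2 * (b + 1) * (t⁻¹ * ⟪x t - z, v t⟫)) + 1 := by
  simp only [scaledEnergy, crossEnergy, mechanicalEnergy, rpow_two_mul_eq_sq ht.le]
  ring

lemma abs_crossTerm_le (ht : 0 < t) (hb : 0 ≤ b) :
    |t ^ (2 * b) * (2 * (b + 1) * (t⁻¹ * ⟪x t - z, v t⟫))| ≤
      t ^ b * ‖v t‖ * (2 * (b + 1) * t⁻¹ * (t ^ b * ‖x t - z‖)) := by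
  have hcoef : 0 ≤ (t ^ b) ^ 2 * (2 * (b + 1) * t⁻¹) := by positivity
  calc |t ^ (2 * b) * (2 * (b + 1) * (t⁻¹ * ⟪x t - z, v t⟫))|
      = (t ^ b) ^ 2 * (2 * (b + 1) * t⁻¹) * |⟪x t - z, v t⟫| := by
        rw [rpow_two_mul_eq_sq ht.le, ← mul_assoc (2 * (b + 1)), ← mul_assoc, abs_mul,
          abs_of_nonneg hcoef]
    _ ≤ (t ^ b) ^ 2 * (2 * (b + 1) * t⁻¹) * (‖x t - z‖ * ‖v t‖) := by
        gcongr; exact abs_real_inner_le_norm _ _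
    _ = t ^ b * ‖v t‖ * (2 * (b + 1) * t⁻¹ * (t ^ b * ‖x t - z‖)) := by ring

lemma rpow_mul_sub_le_four_mul_scaledEnergy (ht : 0 < t) (hb : 0 ≤ b)
    (hcross : (2 * (b + 1) * t⁻¹ * (t ^ b * ‖x t - z‖)) ^ 2 ≤
      (1 + t ^ (2 * b) * (F (x t) - F z)) / 4) :
    t ^ (2 * b) * (F (x t) - F z) ≤ 4 * scaledEnergy F z b x v t := by
  rw [scaledEnergy_eq ht]
  exact le_four_mul_energy (abs_crossTerm_le ht hb) hcross

end ScaledEnergy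

/-- The function `x` solves `x'' + β(t) x' + ∇F(x) = g(t)` on `[t₀, ∞)`, with velocity `v = x'` and
acceleration `a = x''`. -/
structure IsInertialSolution [CompleteSpace E] (F : E → ℝ) (β : ℝ → ℝ) (g : ℝ → E) (t₀ : ℝ)
    (x v a : ℝ → E) : Prop where
  hasDerivAt_position : ∀ t ≥ t₀, HasDerivAt x (v t) t
  hasDerivAt_velocity : ∀ t ≥ t₀, HasDerivAt v (a t) t
  equation : ∀ t ≥ t₀, a t + β t • v t + gradient F (x t) = g t

namespace IsInertialSolution

variable [CompleteSpace E] {F : E → ℝ} {z : E} {β : ℝ → ℝ} {g x v a : ℝ → E} {t₀ t : ℝ}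

lemma mono {t₁ : ℝ} (hsol : IsInertialSolution F β g t₀ x v a) (h : t₀ ≤ t₁) :
    IsInertialSolution F β g t₁ x v a where
  hasDerivAt_position t ht := hsol.hasDerivAt_position t (h.trans ht)
  hasDerivAt_velocity t ht := hsol.hasDerivAt_velocity t (h.trans ht)
  equation t ht := hsol.equation t (h.trans ht)

lemma inner_acceleration (hsol : IsInertialSolution F β g t₀ x v a) (ht : t₀ ≤ t) (u : E) :
    ⟪u, a t⟫ = ⟪u, g t⟫ - β t * ⟪u, v t⟫ - ⟪gradient F (x t), u⟫ := by
  rw [← hsol.equation t ht, inner_add_right, inner_add_right, inner_smul_right,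
    real_inner_comm u (gradient F (x t))]
  ring

lemma hasDerivAt_mechanicalEnergy (hsol : IsInertialSolution F β g t₀ x v a) (ht : t₀ ≤ t)
    (hdiff : DifferentiableAt ℝ F (x t)) :
    HasDerivAt (mechanicalEnergy F z x v) (⟪v t, g t⟫ - β t * ‖v t‖ ^ 2) t := by
  have hpot := hasDerivAt_comp_inner_gradient hdiff (hsol.hasDerivAt_position t ht)
  have hkin := (hsol.hasDerivAt_velocity t ht).norm_sq
  refine ((hpot.sub_const (F z)).add (hkin.div_const 2)).congr_deriv ?_
  rw [hsol.inner_acceleration ht, real_inner_self_eq_norm_sq]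
  ring

lemma exists_forall_sub_le (hsol : IsInertialSolution F β g t₀ x v a)
    (hdiff : ∀ t ≥ t₀, DifferentiableAt ℝ F (x t)) (hmin : ∀ t ≥ t₀, F z ≤ F (x t))
    (hβ : ∀ t ≥ t₀, 0 ≤ β t) (hg : ContinuousOn g (Ici t₀)) (hint : IntegrableOn g (Ici t₀)) :
    ∃ R, ∀ t ≥ t₀, F (x t) - F z ≤ R := by
  have hderiv : ∀ t ≥ t₀, HasDerivAt (fun s => mechanicalEnergy F z x v s + 1)
      (⟪v t, g t⟫ - β t * ‖v t‖ ^ 2) t := fun t ht =>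
    (hsol.hasDerivAt_mechanicalEnergy ht (hdiff t ht)).add_const 1
  obtain ⟨R, hR⟩ := exists_forall_le_of_deriv_le_mul (q := 0)
    (fun t ht => (hderiv t ht).differentiableAt) hg.norm hint.norm fun t ht _ => by
      have hspeed : ‖v t‖ ≤ mechanicalEnergy F z x v t + 1 := by
        simp only [mechanicalEnergy]
        nlinarith [hmin t ht, sq_nonneg (‖v t‖ - 1)]
      calc deriv (fun s => mechanicalEnergy F z x v s + 1) t
          = ⟪v t, g t⟫ - β t * ‖v t‖ ^ 2 := (hderiv t ht).deriv
        _ ≤ ⟪v t, g t⟫ := sub_le_self _ (mul_nonneg (hβ t ht) (sq_nonneg _))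
        _ ≤ ‖v t‖ * ‖g t‖ := real_inner_le_norm _ _
        _ ≤ ‖g t‖ * (mechanicalEnergy F z x v t + 1) := by rw [mul_comm]; gcongr
  refine ⟨R, fun t ht => le_trans ?_ (hR t ht)⟩
  simp only [mechanicalEnergy]
  nlinarith [sq_nonneg ‖v t‖]

lemma hasDerivAt_crossEnergy (hsol : IsInertialSolution F β g t₀ x v a) (ht : t₀ ≤ t)
    (ht₀ : t ≠ 0) (hdiff : DifferentiableAt ℝ F (x t)) (c : ℝ) :
    HasDerivAt (crossEnergy F z c x v) (⟪v t, g t⟫ - β t * ‖v t‖ ^ 2 +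
      c * (t⁻¹ * (⟪x t - z, g t⟫ - β t * ⟪x t - z, v t⟫ - ⟪gradient F (x t), x t - z⟫ +
        ‖v t‖ ^ 2) - t⁻¹ ^ 2 * ⟪x t - z, v t⟫)) t := by
  have hinner := ((hsol.hasDerivAt_position t ht).sub_const z).inner ℝ
    (hsol.hasDerivAt_velocity t ht)
  refine ((hsol.hasDerivAt_mechanicalEnergy ht hdiff).add
    (((hasDerivAt_inv ht₀).mul hinner).const_mul c)).congr_deriv ?_
  rw [hsol.inner_acceleration ht, real_inner_self_eq_norm_sq, inv_pow]
  ring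

lemma deriv_crossEnergy_add_le (hsol : IsInertialSolution F β g t₀ x v a) (ht : t₀ ≤ t)
    (ht₀ : 0 < t) (hdiff : DifferentiableAt ℝ F (x t))
    (hgrad : F (x t) - F z ≤ ⟪gradient F (x t), x t - z⟫)
    {b : ℝ} (hb : 0 ≤ b) (hβ : 6 * (b + 1) * t⁻¹ ≤ β t) :
    deriv (crossEnergy F z (2 * (b + 1)) x v) t +
        2 * b * t⁻¹ * crossEnergy F z (2 * (b + 1)) x v t ≤
      ‖g t‖ * (‖v t‖ + 2 * (b + 1) * t⁻¹ * ‖x t - z‖) - t⁻¹ * ‖v t‖ ^ 2 -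
        2 * t⁻¹ * (F (x t) - F z) +
        2 * (2 * (b + 1)) ^ 2 * (β t * t⁻¹ ^ 2 * ‖x t - z‖ ^ 2) := by
  rw [(hsol.hasDerivAt_crossEnergy ht ht₀.ne' hdiff _).deriv, crossEnergy, mechanicalEnergy]
  have hi : 0 < t⁻¹ := inv_pos.2 ht₀
  set c := 2 * (b + 1)
  have hc₀ : 0 ≤ c := by positivity
  have hforce_v : ⟪v t, g t⟫ ≤ ‖v t‖ * ‖g t‖ := real_inner_le_norm _ _
  have hforce_x : c * t⁻¹ * ⟪x t - z, g t⟫ ≤ c * t⁻¹ * (‖x t - z‖ * ‖g t‖) := by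
    gcongr; exact real_inner_le_norm _ _
  have hpotential : c * t⁻¹ * (F (x t) - F z) ≤ c * t⁻¹ * ⟪gradient F (x t), x t - z⟫ := by
    gcongr
  have hdamping : (c + b + 1) * t⁻¹ * ‖v t‖ ^ 2 ≤ β t / 2 * ‖v t‖ ^ 2 := by
    gcongr; linarith
  have hcross := mul_le_sq_half_add_of_abs_le hi.le hb (by nlinarith)
    (abs_real_inner_le_norm (x t - z) (v t)) c hc₀ (β := β t)
  linarith

lemma hasDerivAt_scaledEnergy (hsol : IsInertialSolution F β g t₀ x v a) (ht : t₀ ≤ t)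
    (ht₀ : 0 < t) (hdiff : DifferentiableAt ℝ F (x t)) (b : ℝ) :
    HasDerivAt (scaledEnergy F z b x v)
      (t ^ (2 * b) * (deriv (crossEnergy F z (2 * (b + 1)) x v) t +
        2 * b * t⁻¹ * crossEnergy F z (2 * (b + 1)) x v t)) t :=
  (hasDerivAt_rpow_mul (2 * b) ht₀
    (hsol.hasDerivAt_crossEnergy ht ht₀.ne' hdiff _).differentiableAt.hasDerivAt).add_const 1

lemma deriv_scaledEnergy_le (hsol : IsInertialSolution F β g t₀ x v a) (ht : t₀ ≤ t)
    (ht₀ : 0 < t) (hdiff : DifferentiableAt ℝ F (x t))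
    (hmin : F z ≤ F (x t)) (hgrad : F (x t) - F z ≤ ⟪gradient F (x t), x t - z⟫)
    {b B : ℝ} (hb : 0 ≤ b) (hβ : 6 * (b + 1) * t⁻¹ ≤ β t)
    (hcross : (2 * (b + 1) * t⁻¹ * (t ^ b * ‖x t - z‖)) ^ 2 ≤
      (1 + t ^ (2 * b) * (F (x t) - F z)) / 4)
    (hdist : 2 * (2 * (b + 1)) ^ 2 * (β t * t⁻¹ * (t ^ b * ‖x t - z‖) ^ 2) ≤
      t ^ (2 * b) * (F (x t) - F z) + B)
    (hlarge : 5 / 4 * (B + 1) ≤ scaledEnergy F z b x v t) :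
    deriv (scaledEnergy F z b x v) t ≤ 4 * (t ^ b * ‖g t‖) * scaledEnergy F z b x v t := by
  have hlyap := mul_le_mul_of_nonneg_left
    (hsol.deriv_crossEnergy_add_le ht ht₀ hdiff hgrad hb hβ) (sq_nonneg (t ^ b))
  rw [← rpow_two_mul_eq_sq ht₀.le, ← (hsol.hasDerivAt_scaledEnergy ht ht₀ hdiff b).deriv,
    rpow_two_mul_eq_sq ht₀.le] at hlyap
  rw [scaledEnergy_eq ht₀] at hlarge ⊢
  have hy₀ : 0 ≤ t ^ (2 * b) * (F (x t) - F z) :=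
    mul_nonneg (by positivity) (sub_nonneg.2 hmin)
  have hcrossTerm := abs_crossTerm_le ht₀ hb (x := x) (v := v) (z := z)
  have hforce := add_le_four_mul_energy hy₀ hcrossTerm hcross
  have hupper := energy_le_five_fourths_mul hcrossTerm hcross
  rw [rpow_two_mul_eq_sq ht₀.le] at hdist hlarge hforce hupper ⊢
  set N := t ^ b * ‖v t‖ with hN
  set Q := 2 * (b + 1) * t⁻¹ * (t ^ b * ‖x t - z‖) with hQ
  set y := (t ^ b) ^ 2 * (F (x t) - F z) with hy
  set D := 2 * (2 * (b + 1)) ^ 2 * (β t * t⁻¹ * (t ^ b * ‖x t - z‖) ^ 2) with hD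
  have hdissipation : t⁻¹ * (D - N ^ 2 - 2 * y) ≤ 0 :=
    mul_nonpos_of_nonneg_of_nonpos (by positivity) (by linarith)
  calc deriv (scaledEnergy F z b x v) t
      ≤ t ^ b * ‖g t‖ * (N + Q) + t⁻¹ * (D - N ^ 2 - 2 * y) :=
        hlyap.trans_eq (by rw [hN, hQ, hy, hD]; ring)
    _ ≤ t ^ b * ‖g t‖ * (N + Q) := by linarith
    _ ≤ t ^ b * ‖g t‖ * (4 * _) := mul_le_mul_of_nonneg_left hforce (by positivity)
    _ = _ := by ring

lemma exists_forall_rpow_mul_sub_le (hsol : IsInertialSolution F β g t₀ x v a) (ht₀ : 0 < t₀)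
    (hdiff : ∀ t ≥ t₀, DifferentiableAt ℝ F (x t)) (hmin : ∀ t ≥ t₀, F z ≤ F (x t))
    (hgrad : ∀ t ≥ t₀, F (x t) - F z ≤ ⟪gradient F (x t), x t - z⟫)
    {b B : ℝ} (hb : 0 ≤ b) (hB : 1 ≤ B) (hβ : ∀ t ≥ t₀, (6 * (b + 1) + 2 * B) * t⁻¹ ≤ β t)
    (hdist : ∀ t ≥ t₀, 2 * (2 * (b + 1)) ^ 2 * (β t * t⁻¹ * (t ^ b * ‖x t - z‖) ^ 2) ≤
      t ^ (2 * b) * (F (x t) - F z) + B)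
    (hg : ContinuousOn g (Ici t₀)) (hint : IntegrableOn (fun t => t ^ b * ‖g t‖) (Ici t₀)) :
    ∃ C, ∀ t ≥ t₀, t ^ (2 * b) * (F (x t) - F z) ≤ C := by
  have hpos : ∀ t ≥ t₀, 0 < t := fun t ht => ht₀.trans_le ht
  have hcross : ∀ t ≥ t₀, (2 * (b + 1) * t⁻¹ * (t ^ b * ‖x t - z‖)) ^ 2 ≤
      (1 + t ^ (2 * b) * (F (x t) - F z)) / 4 := fun t ht => by
    have hi := inv_pos.2 (hpos t ht)
    have hy : 0 ≤ t ^ (2 * b) * (F (x t) - F z) :=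
      mul_nonneg (Real.rpow_nonneg (hpos t ht).le _) (sub_nonneg.2 (hmin t ht))
    exact crossTerm_sq_le hi hy hB (le_trans (by gcongr; linarith) (hβ t ht)) (hdist t ht)
  have hweight : ContinuousOn (fun t => 4 * (t ^ b * ‖g t‖)) (Ici t₀) :=
    continuousOn_const.mul
      ((continuousOn_id.rpow_const fun t ht => Or.inl (hpos t ht).ne').mul hg.norm)
  obtain ⟨C, hC⟩ := exists_forall_le_of_deriv_le_mul (q := 5 / 4 * (B + 1))
    (fun t ht => (hsol.hasDerivAt_scaledEnergy ht (hpos t ht) (hdiff t ht) b).differentiableAt)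
    hweight (hint.const_mul 4) fun t ht hlarge =>
      hsol.deriv_scaledEnergy_le ht (hpos t ht) (hdiff t ht) (hmin t ht) (hgrad t ht) hb
        ((mul_le_mul_of_nonneg_right (by linarith) (inv_nonneg.2 (hpos t ht).le)).trans (hβ t ht))
        (hcross t ht) (hdist t ht) hlarge
  refine ⟨4 * C, fun t ht => ?_⟩
  exact (rpow_mul_sub_le_four_mul_scaledEnergy (hpos t ht) hb (hcross t ht)).trans
    (mul_le_mul_of_nonneg_left (hC t ht) (by norm_num))

end IsInertialSolution

end Dynamics

section Rate

open Set Filter Topology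

lemma eventually_mul_inv_le_div_rpow {α θ : ℝ} (hα : 0 < α) (hθ : θ < 1) (M : ℝ) :
    ∀ᶠ t : ℝ in atTop, M * t⁻¹ ≤ α / t ^ θ := by
  filter_upwards [(tendsto_rpow_atTop (sub_pos.2 hθ)).eventually_ge_atTop (M / α),
    eventually_gt_atTop 0] with t ht ht₀
  rw [Real.rpow_sub ht₀, Real.rpow_one, div_le_div_iff₀ hα (by positivity)] at ht
  rw [← div_eq_mul_inv, div_le_div_iff₀ ht₀ (by positivity)]
  linarith

/-- The identity `2 b - (1 + θ) = 4 b / γ` turns `t ^ (2 b) d² / t ^ (1 + θ)` into the square of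
`u = t ^ (2 b / γ) d`, while `t ^ (2 b) d ^ γ = u ^ γ`. -/
lemma exists_forall_mul_sq_le_rpow_mul_add {θ γ b K : ℝ} (hγ : 2 < γ) (hK : 0 < K)
    (hb : b * (γ - 2) = (1 + θ) / 2 * γ) {L : ℝ} (hL : 0 ≤ L) :
    ∃ B, ∀ t d w : ℝ, 0 < t → 0 ≤ d → K * d ^ γ ≤ w →
      L / t ^ θ * t⁻¹ * (t ^ b * d) ^ 2 ≤ t ^ (2 * b) * w + B := by
  obtain ⟨B, hB⟩ := exists_mul_rpow_le_mul_rpow_add zero_le_two hγ hL hK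
  have hγ₀ : γ ≠ 0 := by linarith
  refine ⟨B, fun t d w ht hd hw => ?_⟩
  have hpow : (t ^ (2 * b / γ) * d) ^ γ = t ^ (2 * b) * d ^ γ := by
    rw [Real.mul_rpow (by positivity) hd, ← Real.rpow_mul ht.le, div_mul_cancel₀ _ hγ₀]
  have hexp : -θ + -1 + 2 * b = 2 * (2 * b / γ) := by
    field_simp
    linarith
  have hsq : (t ^ (2 * b / γ)) ^ 2 = (t ^ θ)⁻¹ * t⁻¹ * (t ^ b) ^ 2 := by
    rw [← rpow_two_mul_eq_sq ht.le, ← rpow_two_mul_eq_sq ht.le, ← hexp, Real.rpow_add ht,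
      Real.rpow_add ht, Real.rpow_neg ht.le, Real.rpow_neg_one]
  calc L / t ^ θ * t⁻¹ * (t ^ b * d) ^ 2 = L * (t ^ (2 * b / γ) * d) ^ (2 : ℝ) := by
        rw [Real.rpow_two, mul_pow (t ^ (2 * b / γ)) d, hsq]
        ring
    _ ≤ K * (t ^ (2 * b / γ) * d) ^ γ + B := hB _ (by positivity)
    _ = t ^ (2 * b) * (K * d ^ γ) + B := by rw [hpow]; ring
    _ ≤ t ^ (2 * b) * w + B := by gcongr

variable {E : Type*} [NormedAddCommGroup E]

lemma integrableOn_Ici_of_integrableOn_rpow_mul_norm {g : ℝ → E} {t₀ b : ℝ} (ht₀ : 0 < t₀)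
    (hb : 0 ≤ b) (hg : ContinuousOn g (Ici t₀))
    (hint : IntegrableOn (fun t => t ^ b * ‖g t‖) (Ici t₀)) : IntegrableOn g (Ici t₀) := by
  refine (hint.const_mul (t₀ ^ b)⁻¹).mono' (hg.aestronglyMeasurable measurableSet_Ici)
    ((ae_restrict_mem measurableSet_Ici).mono fun t ht => ?_)
  have : t₀ ^ b ≤ t ^ b := Real.rpow_le_rpow ht₀.le ht hb
  rw [← mul_assoc, inv_mul_eq_div]
  exact le_mul_of_one_le_left (norm_nonneg _) ((one_le_div (by positivity)).2 this)

variable [InnerProductSpace ℝ E] [CompleteSpace E]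

lemma IsInertialSolution.exists_forall_rpow_mul_sub_le_of_rpow_growth {F : E → ℝ} {z : E}
    {α t₀ θ γ b K : ℝ} {g x v a : ℝ → E}
    (hsol : IsInertialSolution F (fun t => α / t ^ θ) g t₀ x v a)
    (hα : 0 < α) (ht₀ : 0 < t₀) (hθ : θ < 1) (hγ : 2 < γ) (hb : 0 ≤ b)
    (hbγ : b * (γ - 2) = (1 + θ) / 2 * γ) (hK : 0 < K)
    (hdiff : ∀ t ≥ t₀, DifferentiableAt ℝ F (x t))
    (hgrad : ∀ t ≥ t₀, F (x t) - F z ≤ ⟪gradient F (x t), x t - z⟫)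
    (hgrowth : ∀ t ≥ t₀, K * ‖x t - z‖ ^ γ ≤ F (x t) - F z)
    (hg : ContinuousOn g (Ici t₀)) (hint : IntegrableOn (fun t => t ^ b * ‖g t‖) (Ici t₀)) :
    ∃ C, ∃ t₁ ≥ t₀, ∀ t ≥ t₁, t ^ (2 * b) * (F (x t) - F z) ≤ C := by
  obtain ⟨B, hB⟩ := exists_forall_mul_sq_le_rpow_mul_add hγ hK hbγ
    (by positivity : 0 ≤ 2 * (2 * (b + 1)) ^ 2 * α)
  obtain ⟨T, hT⟩ := eventually_atTop.1
    (eventually_mul_inv_le_div_rpow hα hθ (6 * (b + 1) + 2 * max 1 B))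
  set t₁ := max t₀ T
  have ht₁ : ∀ {t}, t ≥ t₁ → t ≥ t₀ := fun ht => (le_max_left _ _).trans ht
  have hmin : ∀ t ≥ t₀, F z ≤ F (x t) := fun t ht =>
    sub_nonneg.1 ((by positivity : 0 ≤ K * ‖x t - z‖ ^ γ).trans (hgrowth t ht))
  have hdist : ∀ t ≥ t₀, 2 * (2 * (b + 1)) ^ 2 * (α / t ^ θ * t⁻¹ * (t ^ b * ‖x t - z‖) ^ 2) ≤
      t ^ (2 * b) * (F (x t) - F z) + max 1 B := fun t ht =>
    calc 2 * (2 * (b + 1)) ^ 2 * (α / t ^ θ * t⁻¹ * (t ^ b * ‖x t - z‖) ^ 2)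
        = 2 * (2 * (b + 1)) ^ 2 * α / t ^ θ * t⁻¹ * (t ^ b * ‖x t - z‖) ^ 2 := by ring
      _ ≤ t ^ (2 * b) * (F (x t) - F z) + B :=
        hB t _ _ (ht₀.trans_le ht) (norm_nonneg _) (hgrowth t ht)
      _ ≤ t ^ (2 * b) * (F (x t) - F z) + max 1 B := by gcongr; exact le_max_right _ _
  obtain ⟨C, hC⟩ := (hsol.mono (ht₁ le_rfl)).exists_forall_rpow_mul_sub_le
    (ht₀.trans_le (ht₁ le_rfl)) (fun t ht => hdiff t (ht₁ ht)) (fun t ht => hmin t (ht₁ ht))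
    (fun t ht => hgrad t (ht₁ ht)) hb (le_max_left 1 B)
    (fun t ht => hT t ((le_max_right _ _).trans ht)) (fun t ht => hdist t (ht₁ ht))
    (hg.mono fun _ => ht₁) (hint.mono_set fun _ => ht₁)
  exact ⟨C, t₁, ht₁ le_rfl, hC⟩

theorem stmt_9_general {F : E → ℝ} {z : E} (hconv : ConvexOn ℝ univ F) (hdiff : Differentiable ℝ F)
    {α t₀ θ γ r K : ℝ} (hα : 0 < α) (ht₀ : 0 < t₀) (hθ : -1 < θ) (hθ1 : θ < 1) (hγ : 2 < γ)
    (hr : r = (1 + θ) / 2) (hK : 0 < K)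
    (hgrowth : ∀ᶠ y in 𝓝 z, K * ‖y - z‖ ^ γ ≤ F y - F z)
    {g x v a : ℝ → E} (hg : ContinuousOn g (Ici t₀))
    (hsol : IsInertialSolution F (fun t => α / t ^ θ) g t₀ x v a)
    (hint : IntegrableOn (fun t => t ^ (r * γ / (γ - 2)) * ‖g t‖) (Ici t₀)) :
    ∃ C > 0, ∃ t₁ ≥ t₀, ∀ t ≥ t₁, F (x t) - F z ≤ C * t ^ (-(2 * r * γ / (γ - 2))) := by
  set b := r * γ / (γ - 2) with hb
  have hγ₂ : 0 < γ - 2 := sub_pos.2 hγ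
  have hb₀ : 0 ≤ b := div_nonneg (mul_nonneg (by linarith) (by linarith)) hγ₂.le
  have hmin := apply_le_of_convexOn_of_rpow_growth hconv hK.le hgrowth
  have hβ : ∀ t ≥ t₀, 0 ≤ α / t ^ θ := fun t ht =>
    div_nonneg hα.le (Real.rpow_nonneg (ht₀.le.trans ht) θ)
  obtain ⟨R, hR⟩ := hsol.exists_forall_sub_le (fun t _ => hdiff (x t)) (fun t _ => hmin (x t)) hβ hg
    (integrableOn_Ici_of_integrableOn_rpow_mul_norm ht₀ hb₀ hg hint)
  obtain ⟨K', hK', hsublevel⟩ :=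
    exists_mul_rpow_norm_sub_le_of_convexOn_of_sublevel hconv hK hgrowth R
  obtain ⟨C, t₁, ht₁, hC⟩ := hsol.exists_forall_rpow_mul_sub_le_of_rpow_growth hα ht₀ hθ1 hγ hb₀
    (by rw [hb, hr]; field_simp) hK' (fun t _ => hdiff (x t))
    (fun t _ => sub_le_inner_gradient_of_convexOn hconv (hdiff (x t)) z)
    (fun t ht => hsublevel (x t) (hR t ht)) hg hint
  refine ⟨max 1 C, by positivity, t₁, ht₁, fun t ht => ?_⟩
  have ht_pos : 0 < t := ht₀.trans_le (ht₁.trans ht)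
  rw [show 2 * r * γ / (γ - 2) = 2 * b by rw [hb]; ring, Real.rpow_neg ht_pos.le, ← div_eq_mul_inv,
    le_div_iff₀' (by positivity)]
  exact (hC t ht).trans (le_max_right _ _)

end Rate

theorem stmt_9
    {n : ℕ} (hn : 1 ≤ n)
    (F : EuclideanSpace ℝ (Fin n) → ℝ) (Fstar : ℝ)
    (Xstar : Set (EuclideanSpace ℝ (Fin n)))
    (hXstar : Xstar = {z | ∀ y, F z ≤ F y})
    (hne : Xstar.Nonempty)
    (hFstar : ∀ z ∈ Xstar, F z = Fstar)
    (hconv : ConvexOn ℝ Set.univ F)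
    (hdiff : Differentiable ℝ F)
    (α t₀ θ γ₁ γ₂ r : ℝ) (hα : 0 < α) (ht₀ : 0 < t₀) (hθ : 0 ≤ θ) (hθ1 : θ < 1)
    (hγ₁ : 2 < γ₁) (hγ₁₂ : γ₁ ≤ γ₂) (hr : r = (1 + θ) / 2)
    (g x x' x'' : ℝ → EuclideanSpace ℝ (Fin n))
    (hg : ContinuousOn g (Set.Ici t₀))
    (hx : ∀ t ∈ Set.Ici t₀, HasDerivAt x (x' t) t)
    (hx'd : ∀ t ∈ Set.Ici t₀, HasDerivAt x' (x'' t) t)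
    (hx''c : ContinuousOn x'' (Set.Ici t₀))
    (hode : ∀ t ∈ Set.Ici t₀, x'' t + (α / t ^ θ) • x' t + gradient F (x t) = g t)
    (hH1 : ∀ z ∈ Xstar, ∃ η > 0, ∀ y : EuclideanSpace ℝ (Fin n),
      ‖y - z‖ < η → F y - Fstar ≤ (1 / γ₁) * ⟪gradient F y, y - z⟫)
    (hH2 : ∀ z ∈ Xstar, ∃ K > 0, ∃ ε > 0, ∀ y : EuclideanSpace ℝ (Fin n),
      ‖y - z‖ < ε → K * Metric.infDist y Xstar ^ (γ₂ : ℝ) ≤ F y - Fstar)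
    (huniq : ∃ z, Xstar = {z})
    (hint : IntegrableOn (fun t : ℝ => t ^ (r * γ₂ / (γ₂ - 2)) * ‖g t‖) (Set.Ici t₀)) :
    ∃ C > 0, ∃ t₁ ≥ t₀, ∀ t ≥ t₁,
      F (x t) - Fstar ≤ C * t ^ (-(2 * r * γ₂ / (γ₂ - 2))) := by
  obtain ⟨z, rfl⟩ := huniq
  obtain ⟨K, hK, ε, hε, hgrowth⟩ := hH2 z rfl
  rw [← hFstar z rfl] at hgrowth ⊢
  exact stmt_9_general hconv hdiff hα ht₀ (by linarith) hθ1 (hγ₁.trans_le hγ₁₂) hr hK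
    (Metric.eventually_nhds_iff.2 ⟨ε, hε, fun y hy => by
      simpa only [Metric.infDist_singleton, dist_eq_norm] using
        hgrowth y (by rwa [← dist_eq_norm])⟩)
    hg ⟨hx, hx'd, hode⟩ hint
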